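/- Fix n ≥ 2 and consider the (n+1)-cube I^{n+1}. For every absolutely incoming (n−1)-face f and every absolutely outgoing (n−1)-face h of I^{n+1}, there exist an (n−1)-face g and n-faces u, v of I^{n+1} such that Γ_{n+1} contains the directed path f → u → g → v → h; that is, f is an incoming subface of u, g is an outgoing subface of u and an incoming subface of v, and h is an outgoing subface of v. In particular, every absolutely incoming (n−1)-face precedes every absolutely outgoing (n−1)-face in the partial order generated by the edges of Γ_{n+1}. -/

import Mathlib

/-- A face of the `N`-dimensional cube `I^N`, encoded as a function assigning to each
coordinate position either a digit (`some false` = 0, `some true` = 1) or an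
asterisk (`none`). -/
abbrev CubeFace (N : ℕ) := Fin N → Option Bool

/-- `τ` is a `k`-face: exactly `k` positions carry an asterisk. -/
def IsFace {N : ℕ} (k : ℕ) (τ : CubeFace N) : Prop :=
  (Finset.filter (fun i => τ i = none) Finset.univ).card = k

/-- The digit `κ` associated to the asterisk position `p` of `f`: if `p` is the `k`-th
asterisk position of `f` (counting 1-based from the left), then `κ = 0` (i.e. `false`)
for odd `k` and `κ = 1` (i.e. `true`) for even `k`.  Equivalently, `κ` is `true` iff the
number of asterisk positions strictly before `p` is odd. -/
def kappa {N : ℕ} (f : CubeFace N) (p : Fin N) : Bool :=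
  decide (Odd ((Finset.filter (fun q => q < p ∧ f q = none) Finset.univ).card))

/-- `g` is obtained from `f` by replacing the asterisk at position `p` by the digit `d`. -/
def SubfaceAt {N : ℕ} (f g : CubeFace N) (p : Fin N) (d : Bool) : Prop :=
  f p = none ∧ g p = some d ∧ ∀ q, q ≠ p → g q = f q

/-- `g` is an incoming subface of `f`: it is obtained from `f` by replacing the asterisk
at some position `p` by the digit `κ(f, p)`. -/
def Incoming {N : ℕ} (f g : CubeFace N) : Prop := ∃ p, SubfaceAt f g p (kappa f p)

/-- `g` is an outgoing subface of `f`: it is obtained from `f` by replacing the asterisk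
at some position `p` by the digit different from `κ(f, p)`. -/
def Outgoing {N : ℕ} (f g : CubeFace N) : Prop := ∃ p, SubfaceAt f g p (!kappa f p)

/-- The order of a face `g`: the number of `n`-faces of the cube for which `g` is an
incoming subface. -/
noncomputable def faceOrder {N : ℕ} (n : ℕ) (g : CubeFace N) : ℕ :=
  Nat.card {f : CubeFace N // IsFace n f ∧ Incoming f g}

/-- The edge relation of the directed graph `Γ_{n+1}`: its vertices are the `n`-faces
and `(n-1)`-faces of `I^{n+1}`; there is an edge from an `(n-1)`-face `g` to an
`n`-face `f` if `g` is an incoming subface of `f`, and an edge from `f` to `g` if `g`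
is an outgoing subface of `f`. -/
def GammaEdge {N : ℕ} (n : ℕ) (a b : CubeFace N) : Prop :=
  (IsFace (n - 1) a ∧ IsFace n b ∧ Incoming b a) ∨
  (IsFace n a ∧ IsFace (n - 1) b ∧ Outgoing a b)

/-!
Let `κ` be the digits attached to the asterisks of the whole cube, and write `A_p` and `B_p` for the
facets with digit `κ_p`, respectively `1 - κ_p`, at position `p`. Inserting a digit at `p` flips the
digits attached to the later asterisks and keeps the earlier ones. Hence, for `p < q`, the
codimension-two face `A_p ∩ B_q` is incoming for both facets containing it, `B_p ∩ A_q` is outgoing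
for both, and `A_p ∩ A_q` and `B_p ∩ B_q` give the paths
`A_p → A_p ∩ A_q → A_q` and `B_q → B_p ∩ B_q → B_p`.
So `A_a ∩ B_b` reaches `B_p ∩ A_q` through the `A`-facets if `a < q` and through the `B`-facets if
`p < b`; as `a < b` and `p < q`, one of the two inequalities holds.
-/

open Function

namespace CubeFace

variable {N k : ℕ} {f g c : CubeFace N} {p q : Fin N}

/-- The subface of `f` at the asterisk position `p`: the incoming one for `ε = false`, the outgoing
one for `ε = true`. If `p` is not an asterisk position, the digit of `f` there is overwritten. -/
def subface (f : CubeFace N) (p : Fin N) (ε : Bool) : CubeFace N :=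
  update f p (some (kappa f p ^^ ε))

theorem kappa_update_of_le (hqp : q ≤ p) (f : CubeFace N) (o : Option Bool) :
    kappa (update f p o) q = kappa f q := by
  have hstars : ∀ i, (i < q ∧ update f p o i = none) ↔ (i < q ∧ f i = none) := fun i =>
    and_congr_right fun hi => by rw [update_of_ne (hi.trans_le hqp).ne]
  simp only [kappa, hstars]

theorem kappa_update_some_of_lt (hpq : p < q) (hp : f p = none) (d : Bool) :
    kappa (update f p (some d)) q = !kappa f q := by
  have hstars : Finset.univ.filter (fun i => i < q ∧ f i = none) =
      insert p (Finset.univ.filter fun i => i < q ∧ update f p (some d) i = none) := by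
    ext i
    obtain rfl | hi := eq_or_ne i p <;> simp [*]
  rw [kappa, kappa, hstars, Finset.card_insert_of_notMem (by simp), ← decide_not]
  simp only [Nat.odd_add_one, not_not]

theorem subface_apply_of_ne (hqp : q ≠ p) (f : CubeFace N) (ε : Bool) :
    f.subface p ε q = f q :=
  update_of_ne hqp _ _

theorem subface_comm (hpq : p < q) (hp : c p = none) (ε δ : Bool) :
    (c.subface p ε).subface q δ = (c.subface q !δ).subface p ε := by
  simp only [subface, kappa_update_some_of_lt hpq hp, kappa_update_of_le hpq.le, Bool.not_xor,
    Bool.xor_not]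
  exact update_comm hpq.ne _ _ _

theorem subface_update_none {ε : Bool} (hp : g p = some (kappa g p ^^ ε)) :
    subface (update g p none) p ε = g := by
  rw [subface, kappa_update_of_le le_rfl, update_idem, ← hp, update_eq_self]

theorem incoming_subface (hp : f p = none) : Incoming f (f.subface p false) :=
  ⟨p, hp, by simp [subface], fun _ hq => subface_apply_of_ne hq f false⟩

theorem outgoing_subface (hp : f p = none) : Outgoing f (f.subface p true) :=
  ⟨p, hp, by simp [subface], fun _ hq => subface_apply_of_ne hq f true⟩

-- `kappa g p` does not depend on `g p`, so it is also the digit of `f = update g p none` at `p`.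
theorem incoming_iff : Incoming f g ↔ ∃ p, g p = some (kappa g p) ∧ update g p none = f := by
  constructor
  · rintro ⟨p, hfp, hgp, hne⟩
    have hf : update g p none = f := update_eq_iff.2 ⟨hfp.symm, hne⟩
    exact ⟨p, by rw [hgp, ← hf, kappa_update_of_le le_rfl], hf⟩
  · rintro ⟨p, hp, rfl⟩
    have hinc := incoming_subface (update_self p none g)
    rwa [subface_update_none (by rwa [Bool.xor_false])] at hinc

theorem isFace_update_none_iff (hp : g p ≠ none) :
    IsFace (k + 1) (update g p none) ↔ IsFace k g := by
  have hstars : Finset.univ.filter (fun i => update g p none i = none) =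
      insert p (Finset.univ.filter fun i => g i = none) := by
    ext i
    obtain rfl | hi := eq_or_ne i p <;> simp [*]
  rw [IsFace, IsFace, hstars, Finset.card_insert_of_notMem (by simpa using hp),
    Nat.add_right_cancel_iff]

theorem isFace_subface (hf : IsFace (k + 1) f) (hp : f p = none) (ε : Bool) :
    IsFace k (f.subface p ε) := by
  refine (isFace_update_none_iff (p := p) (by simp [subface])).1 ?_
  rwa [subface, update_idem, ← hp, update_eq_self]

theorem card_digits (hg : IsFace k g) : (Finset.univ.filter fun p => g p ≠ none).card = N - k := by
  rw [← Finset.compl_filter, Finset.card_compl, hg, Fintype.card_fin]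

theorem faceOrder_eq_card (hg : IsFace k g) :
    faceOrder (k + 1) g = (Finset.univ.filter fun p => g p = some (kappa g p)).card := by
  have hcofaces : {f | IsFace (k + 1) f ∧ Incoming f g} =
      (fun p => update g p none) '' {p | g p = some (kappa g p)} := by
    ext f
    rw [Set.mem_ofPred_eq, incoming_iff]
    refine ⟨And.right, ?_⟩
    rintro ⟨p, hp : g p = _, rfl⟩
    exact ⟨(isFace_update_none_iff (by simp [hp])).2 hg, p, hp, rfl⟩
  have hinj : Set.InjOn (fun p => update g p none) {p | g p = some (kappa g p)} := by
    intro p (hp : g p = _) q _ heq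
    by_contra hpq
    simpa [hpq, hp] using congrFun heq p
  calc faceOrder (k + 1) g = {f | IsFace (k + 1) f ∧ Incoming f g}.ncard := rfl
    _ = {p | g p = some (kappa g p)}.ncard := by rw [hcofaces, hinj.ncard_image]
    _ = _ := by rw [← Set.ncard_coe_finset, Finset.coe_filter_univ]

theorem faceOrder_eq_sub_iff (hg : IsFace k g) :
    faceOrder (k + 1) g = N - k ↔ ∀ p, g p ≠ none → g p = some (kappa g p) := by
  have hsub : (Finset.univ.filter fun p => g p = some (kappa g p)) ⊆
      Finset.univ.filter fun p => g p ≠ none :=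
    Finset.monotone_filter_right _ fun p _ hp => by simp [hp]
  rw [faceOrder_eq_card hg, ← card_digits hg]
  constructor
  · intro hcard p hp
    have heq := Finset.eq_of_subset_of_card_le hsub hcard.ge
    simpa using heq.ge (by simpa using hp)
  · intro hall
    refine congrArg _ (hsub.antisymm fun p hp => ?_)
    simpa using hall p (by simpa using hp)

theorem faceOrder_eq_zero_iff (hg : IsFace k g) :
    faceOrder (k + 1) g = 0 ↔ ∀ p, g p ≠ none → g p = some !kappa g p := by
  rw [faceOrder_eq_card hg, Finset.card_eq_zero, Finset.filter_eq_empty_iff]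
  refine forall_congr' fun p => ?_
  cases g p <;> simp [Bool.eq_not]

theorem exists_eq_subface_subface {f : CubeFace (k + 2)} {ε : Bool} (hf : IsFace k f)
    (hdigit : ∀ p, f p ≠ none → f p = some (kappa f p ^^ ε)) :
    ∃ a b, a < b ∧ f = (subface (fun _ => none) a ε).subface b ε := by
  obtain ⟨a, b, hab, hdigits⟩ : ∃ a b, a < b ∧ ∀ i, f i ≠ none ↔ i = a ∨ i = b := by
    have hcard := card_digits hf
    rw [Nat.add_sub_cancel_left, Finset.card_eq_two] at hcard
    obtain ⟨a, b, hne, hset⟩ := hcard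
    have hmem : ∀ i, f i ≠ none ↔ i = a ∨ i = b := by simpa [Finset.ext_iff] using hset
    obtain hlt | hlt := hne.lt_or_gt
    · exact ⟨a, b, hlt, hmem⟩
    · exact ⟨b, a, hlt, fun i => (hmem i).trans or_comm⟩
  have hb : subface (update f b none) b ε = f :=
    subface_update_none (hdigit b ((hdigits b).2 (.inr rfl)))
  have ha : subface (update (update f b none) a none) a ε = update f b none := by
    apply subface_update_none
    rw [kappa_update_of_le hab.le, update_of_ne hab.ne]
    exact hdigit a ((hdigits a).2 (.inl rfl))
  have hcube : update (update f b none) a none = fun _ => none := by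
    funext i
    have hi := hdigits i
    simp only [update_apply]
    grind
  exact ⟨a, b, hab, by rw [← hcube, ha, hb]⟩

theorem exists_path_subface_subface {a b : Fin N} (hc : IsFace (k + 2) c) (hab : a < b)
    (hpq : p < q) (ha : c a = none) (hb : c b = none) (hp : c p = none) (hq : c q = none) :
    ∃ g u v, IsFace (k + 1) u ∧ IsFace (k + 1) v ∧ IsFace k g ∧
      Incoming u ((c.subface a false).subface b false) ∧ Outgoing u g ∧
      Incoming v g ∧ Outgoing v ((c.subface p true).subface q true) := by
  have hstar {i j : Fin N} (hij : i ≠ j) (hi : c i = none) (ε : Bool) : c.subface j ε i = none :=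
    (subface_apply_of_ne hij c ε).trans hi
  obtain haq | hqa := lt_or_ge a q
  · refine ⟨(c.subface a false).subface q true, c.subface a false, c.subface q false,
      isFace_subface hc ha _, isFace_subface hc hq _,
      isFace_subface (isFace_subface hc ha _) (hstar haq.ne' hq _) _,
      incoming_subface (hstar hab.ne' hb _), outgoing_subface (hstar haq.ne' hq _), ?_, ?_⟩
    · rw [subface_comm haq ha]
      exact incoming_subface (hstar haq.ne ha _)
    · rw [subface_comm hpq hp]
      exact outgoing_subface (hstar hpq.ne hp _)
  · have hpb : p < b := (hpq.trans_le hqa).trans hab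
    refine ⟨(c.subface p true).subface b false, c.subface b true, c.subface p true,
      isFace_subface hc hb _, isFace_subface hc hp _,
      isFace_subface (isFace_subface hc hp _) (hstar hpb.ne' hb _) _, ?_, ?_,
      incoming_subface (hstar hpb.ne' hb _), outgoing_subface (hstar hpq.ne' hq _)⟩
    · rw [subface_comm hab ha]
      exact incoming_subface (hstar hab.ne ha _)
    · rw [subface_comm hpb hp]
      exact outgoing_subface (hstar hpb.ne hp _)

end CubeFace

open CubeFace

/-- In the `(n+1)`-cube, every absolutely incoming `(n-1)`-face `f` (order `2`) is
joined to every absolutely outgoing `(n-1)`-face `h` (order `0`) by a directed path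
`f → u → g → v → h` in `Γ_{n+1}`; in particular `f` precedes `h` in the partial order
generated by the edges of `Γ_{n+1}`. -/
theorem stmt7 (n : ℕ) (hn : 2 ≤ n) (f h : CubeFace (n + 1))
    (hf1 : IsFace (n - 1) f) (hf2 : faceOrder n f = 2)
    (hh1 : IsFace (n - 1) h) (hh2 : faceOrder n h = 0) :
    (∃ (g u v : CubeFace (n + 1)),
        IsFace n u ∧ IsFace n v ∧ IsFace (n - 1) g ∧
        Incoming u f ∧ Outgoing u g ∧ Incoming v g ∧ Outgoing v h) ∧
    Relation.TransGen (GammaEdge n) f h := by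
  obtain ⟨k, rfl⟩ : ∃ k, n = k + 1 := ⟨n - 1, by omega⟩
  rw [Nat.add_sub_cancel] at hf1 hh1
  have hf_digits := (faceOrder_eq_sub_iff hf1).1 (by rw [hf2]; omega)
  have hh_digits := (faceOrder_eq_zero_iff hh1).1 hh2
  obtain ⟨a, b, hab, hf⟩ := exists_eq_subface_subface (ε := false) hf1 (by simpa using hf_digits)
  obtain ⟨p, q, hpq, hh⟩ := exists_eq_subface_subface (ε := true) hh1 (by simpa using hh_digits)
  have hcube : IsFace (k + 2) (fun _ : Fin (k + 2) => none) := by simp [IsFace]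
  obtain ⟨g, u, v, hu, hv, hg, hfu, hug, hgv, hvh⟩ :=
    exists_path_subface_subface hcube hab hpq rfl rfl rfl rfl
  rw [← hf] at hfu
  rw [← hh] at hvh
  refine ⟨⟨g, u, v, hu, hv, hg, hfu, hug, hgv, hvh⟩, ?_⟩
  exact .head (.inl ⟨hf1, hu, hfu⟩) <| .head (.inr ⟨hu, hg, hug⟩) <|
    .head (.inl ⟨hg, hv, hgv⟩) <| .single (.inr ⟨hv, hh1, hvh⟩)
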